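/- arXiv:0810.2132 — 2 statements merged into one kernel-verified Lean document; each statement's English description precedes it below -/
import Mathlib

section
/- Let n be a positive integer, let E_1, …, E_{2n+1} be Banach spaces over 𝕂 (= ℝ or ℂ), and let 1 ≤ r_{2n+1} ≤ r_1, …, r_{2n} ≤ 2. Suppose that for each i = 1, …, n there is C_{2i} > 0 such that every continuous bilinear form B on E_{2i−1} × E_{2i} is absolutely (1;r_{2i−1},r_{2i})-summing with π_{(1;r_{2i−1},r_{2i})}(B) ≤ C_{2i}‖B‖. Then every continuous 2n-linear form A on E_1 × ⋯ × E_{2n} is absolutely (1;r_1,…,r_{2n})-summing with π_{(1;r_1,…,r_{2n})}(A) ≤ C_2⋯C_{2n}‖A‖, and every continuous (2n+1)-linear form A on E_1 × ⋯ × E_{2n+1} is absolutely (r_{2n+1};r_1,…,r_{2n+1})-summing with π_{(r_{2n+1};r_1,…,r_{2n+1})}(A) ≤ C_2⋯C_{2n}‖A‖. -/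
open scoped BigOperators NNReal ENNReal

/-- The weak `ℓ_r` norm of a finite family `(x_j)` in a normed space:
`sup_{‖φ‖ ≤ 1} (∑_j ‖φ(x_j)‖^r)^(1/r)`. -/
noncomputable def weakNorm (𝕜 : Type*) [RCLike 𝕜] {E : Type*} [NormedAddCommGroup E]
    [NormedSpace 𝕜 E] (r : ℝ) {m : ℕ} (x : Fin m → E) : ℝ :=
  ⨆ φ : {φ : E →L[𝕜] 𝕜 // ‖φ‖ ≤ 1}, (∑ j, ‖φ.1 (x j)‖ ^ r) ^ (1 / r)


theorem weakNorm_nonneg' (𝕜 : Type*) [RCLike 𝕜] {E : Type*} [NormedAddCommGroup E]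
    [NormedSpace 𝕜 E] (r : ℝ) {m : ℕ} (x : Fin m → E) : 0 ≤ weakNorm 𝕜 r x := by
  apply Real.iSup_nonneg
  intro φ
  positivity

theorem le_weakNorm_mul (𝕜 : Type*) [RCLike 𝕜] {E : Type*} [NormedAddCommGroup E]
    [NormedSpace 𝕜 E] (r : ℝ) (hr : 1 ≤ r) {m : ℕ} (x : Fin m → E) (φ : E →L[𝕜] 𝕜) :
    (∑ j, ‖φ (x j)‖ ^ r) ^ (1 / r) ≤ weakNorm 𝕜 r x * ‖φ‖ := by
  have hr0 : 0 < r := by linarith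
  have hbdd : BddAbove (Set.range fun φ : {φ : E →L[𝕜] 𝕜 // ‖φ‖ ≤ 1} =>
      (∑ j, ‖φ.1 (x j)‖ ^ r) ^ (1 / r)) := by
    refine ⟨(∑ j, ‖x j‖ ^ r) ^ (1 / r), ?_⟩
    rintro _ ⟨ψ, rfl⟩
    dsimp only
    gcongr with j
    calc ‖ψ.1 (x j)‖ ≤ ‖ψ.1‖ * ‖x j‖ := ψ.1.le_opNorm _
      _ ≤ 1 * ‖x j‖ := by gcongr; exact ψ.2
      _ = ‖x j‖ := one_mul _
  by_cases h0 : φ = 0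
  · subst h0
    simp [Real.zero_rpow hr0.ne', Real.zero_rpow (inv_ne_zero hr0.ne')]
  · have hφ : 0 < ‖φ‖ := norm_pos_iff.mpr h0
    have hn : ‖((‖φ‖⁻¹ : ℝ) : 𝕜) • φ‖ ≤ 1 := by
      rw [norm_smul]; simp [hφ.ne']
    have h := le_ciSup hbdd ⟨((‖φ‖⁻¹ : ℝ) : 𝕜) • φ, hn⟩
    have e : (∑ j, ‖(((‖φ‖⁻¹ : ℝ) : 𝕜) • φ) (x j)‖ ^ r) ^ (1 / r)
        = ‖φ‖⁻¹ * (∑ j, ‖φ (x j)‖ ^ r) ^ (1 / r) := by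
      have : ∀ j, ‖(((‖φ‖⁻¹ : ℝ) : 𝕜) • φ) (x j)‖ ^ r = (‖φ‖⁻¹) ^ r * ‖φ (x j)‖ ^ r := by
        intro j
        rw [← Real.mul_rpow (by positivity) (by positivity)]
        simp
      simp_rw [this]
      rw [← Finset.mul_sum, Real.mul_rpow (by positivity) (by positivity),
        ← Real.rpow_mul (by positivity), mul_one_div_cancel hr0.ne', Real.rpow_one]
    change (∑ j, ‖(((‖φ‖⁻¹ : ℝ) : 𝕜) • φ) (x j)‖ ^ r) ^ (1 / r) ≤ weakNorm 𝕜 r x at h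
    rw [e, inv_mul_le_iff₀ hφ] at h
    linarith

theorem holder_aux {m : ℕ} (r : ℝ) (hr : 1 ≤ r) (a b : Fin m → ℝ) (ha : ∀ j, 0 ≤ a j)
    (hb : ∀ j, 0 ≤ b j) :
    ∑ j, a j ^ (r - 1) * b j ≤ (∑ j, a j ^ r) ^ ((r - 1) / r) * (∑ j, b j ^ r) ^ (1 / r) := by
  rcases hr.eq_or_lt with h | h
  · subst h; simp
  · have hc : (r / (r - 1)).HolderConjugate r := (Real.HolderConjugate.conjExponent h).symm
    have := Real.inner_le_Lp_mul_Lq_of_nonneg Finset.univ hc (f := fun j => a j ^ (r - 1)) (g := b)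
      (fun j _ => Real.rpow_nonneg (ha j) _) (fun j _ => hb j)
    refine this.trans (le_of_eq ?_)
    have e : ∀ j, (a j ^ (r - 1)) ^ (r / (r - 1)) = a j ^ r := by
      intro j
      rw [← Real.rpow_mul (ha j)]
      congr 1
      field_simp [(by linarith : r - 1 ≠ 0)]
    simp_rw [e, one_div_div]

/-- sign of a boolean -/
noncomputable def sgnB (𝕜 : Type*) [RCLike 𝕜] (b : Bool) : 𝕜 := if b then 1 else -1

theorem sgnB_norm (𝕜 : Type*) [RCLike 𝕜] (b : Bool) : ‖sgnB 𝕜 b‖ = 1 := by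
  cases b <;> simp [sgnB]

theorem sgnB_mul_self (𝕜 : Type*) [RCLike 𝕜] (b : Bool) : sgnB 𝕜 b * sgnB 𝕜 b = 1 := by
  cases b <;> simp [sgnB]

theorem sgnB_orth (𝕜 : Type*) [RCLike 𝕜] {m : ℕ} (j k : Fin m) :
    ∑ ε : Fin m → Bool, sgnB 𝕜 (ε j) * sgnB 𝕜 (ε k) = if k = j then (2 : 𝕜) ^ m else 0 := by
  split_ifs with h
  · subst h
    simp [sgnB_mul_self]
  · have hinv : Function.Involutive
        (fun ε : Fin m → Bool => Function.update ε j (! ε j)) := by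
      intro ε
      simp
    have key := Equiv.sum_comp (hinv.toPerm _)
      (fun ε : Fin m → Bool => sgnB 𝕜 (ε j) * sgnB 𝕜 (ε k))
    have e : ∀ ε : Fin m → Bool, sgnB 𝕜 ((hinv.toPerm _ ε) j) * sgnB 𝕜 ((hinv.toPerm _ ε) k)
        = - (sgnB 𝕜 (ε j) * sgnB 𝕜 (ε k)) := by
      intro ε
      have h1 : (hinv.toPerm _ ε) j = ! ε j := by simp [Function.Involutive.coe_toPerm]
      have h2 : (hinv.toPerm _ ε) k = ε k := by simp [Function.Involutive.coe_toPerm, h]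
      rw [h1, h2]
      cases ε j <;> cases ε k <;> simp [sgnB]
    simp_rw [e] at key
    rw [Finset.sum_neg_distrib] at key
    exact self_eq_neg.mp key.symm

/-- Randomization step for families of bilinear forms. -/
theorem bil_step {𝕜 : Type*} [RCLike 𝕜] {X Y : Type*} [NormedAddCommGroup X]
    [NormedSpace 𝕜 X] [NormedAddCommGroup Y] [NormedSpace 𝕜 Y] {m : ℕ} (x : Fin m → X)
    (y : Fin m → Y) (D : ℝ) (hD : 0 ≤ D)
    (hbil : ∀ B : X →L[𝕜] Y →L[𝕜] 𝕜, ∑ j, ‖B (x j) (y j)‖ ≤ D * ‖B‖)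
    (B : Fin m → X →L[𝕜] Y →L[𝕜] 𝕜) (K : ℝ) (hK : 0 ≤ K)
    (h : ∀ a b, ∑ j, ‖B j a b‖ ≤ K * ‖a‖ * ‖b‖) :
    ∑ j, ‖B j (x j) (y j)‖ ≤ D * K := by
  set S : (Fin m → Bool) → (X →L[𝕜] Y →L[𝕜] 𝕜) := fun ε => ∑ k, sgnB 𝕜 (ε k) • B k with hS
  have hSapp : ∀ ε a b, S ε a b = ∑ k, sgnB 𝕜 (ε k) * B k a b := by
    intro ε a b
    simp [hS]
  have hSn : ∀ ε, ‖S ε‖ ≤ K := by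
    intro ε
    refine ContinuousLinearMap.opNorm_le_bound₂ _ hK ?_
    intro a b
    rw [hSapp]
    refine (norm_sum_le _ _).trans ?_
    simpa [sgnB_norm] using h a b
  have hj : ∀ j, (2 : ℝ) ^ m * ‖B j (x j) (y j)‖ ≤ ∑ ε, ‖S ε (x j) (y j)‖ := by
    intro j
    have e : ∑ ε, sgnB 𝕜 (ε j) * S ε (x j) (y j) = (2 : 𝕜) ^ m * B j (x j) (y j) := by
      simp_rw [hSapp, Finset.mul_sum, ← mul_assoc]
      rw [Finset.sum_comm]
      simp_rw [← Finset.sum_mul, sgnB_orth]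
      simp
    calc (2 : ℝ) ^ m * ‖B j (x j) (y j)‖ = ‖(2 : 𝕜) ^ m * B j (x j) (y j)‖ := by simp
      _ = ‖∑ ε, sgnB 𝕜 (ε j) * S ε (x j) (y j)‖ := by rw [e]
      _ ≤ ∑ ε, ‖sgnB 𝕜 (ε j) * S ε (x j) (y j)‖ := norm_sum_le _ _
      _ = _ := by simp [sgnB_norm]
  have htot : (2 : ℝ) ^ m * ∑ j, ‖B j (x j) (y j)‖ ≤ 2 ^ m * (D * K) := by
    rw [Finset.mul_sum]
    refine (Finset.sum_le_sum fun j _ => hj j).trans ?_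
    rw [Finset.sum_comm]
    calc ∑ ε, ∑ j, ‖S ε (x j) (y j)‖ ≤ ∑ ε : Fin m → Bool, D * K := by
          refine Finset.sum_le_sum fun ε _ => (hbil (S ε)).trans ?_
          exact mul_le_mul_of_nonneg_left (hSn ε) hD
      _ = _ := by simp
  exact le_of_mul_le_mul_left htot (by positivity)

/-- The bilinear form obtained by freezing all variables but two. -/
theorem exists_bil {𝕜 : Type*} [RCLike 𝕜] {ι : Type*} [Fintype ι] [DecidableEq ι]
    {E : ι → Type*} [∀ i, NormedAddCommGroup (E i)] [∀ i, NormedSpace 𝕜 (E i)]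
    (A : ContinuousMultilinearMap 𝕜 E 𝕜) (u : ∀ i, E i) (p q : ι) (hpq : p ≠ q) :
    ∃ B : E p →L[𝕜] E q →L[𝕜] 𝕜, ∀ a b,
      B a b = A (Function.update (Function.update u p a) q b) := by
  have hc : ∀ a b, Function.update (Function.update u p a) q b
      = Function.update (Function.update u q b) p a := by
    intro a b
    exact Function.update_comm hpq a b u
  refine ⟨LinearMap.mkContinuous₂ (LinearMap.mk₂ 𝕜
    (fun a b => A (Function.update (Function.update u p a) q b)) ?_ ?_ ?_ ?_)
    (‖A‖ * ∏ i ∈ (Finset.univ.erase p).erase q, ‖u i‖) ?_, ?_⟩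
  · intro a a' b; simp only [hc]; exact A.map_update_add _ _ _ _
  · intro c a b; simp only [hc]; exact A.map_update_smul _ _ _ _
  · intro a b b'; exact A.map_update_add _ _ _ _
  · intro c a b; exact A.map_update_smul _ _ _ _
  · intro a b
    refine (A.le_opNorm _).trans (le_of_eq ?_)
    rw [mul_assoc, mul_assoc]
    congr 1
    rw [← Finset.mul_prod_erase Finset.univ _ (Finset.mem_univ p),
      ← Finset.mul_prod_erase (Finset.univ.erase p) _
        (Finset.mem_erase.mpr ⟨hpq.symm, Finset.mem_univ q⟩)]
    have : ∏ i ∈ (Finset.univ.erase p).erase q,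
        ‖Function.update (Function.update u p a) q b i‖
        = ∏ i ∈ (Finset.univ.erase p).erase q, ‖u i‖ := by
      refine Finset.prod_congr rfl fun i hi => ?_
      simp only [Finset.mem_erase] at hi
      rw [Function.update_of_ne hi.1, Function.update_of_ne hi.2.1]
    rw [this]
    simp [hpq]
    ring
  · intro a b; rfl

theorem prod_lt_succ {N : ℕ} (f : Fin N → ℝ) (k : ℕ) (hk : k < N) :
    (∏ i : Fin N, if i.val < k + 1 then f i else 1)
      = (∏ i : Fin N, if i.val < k then f i else 1) * f ⟨k, hk⟩ := by
  have : ∀ i : Fin N, (if i.val < k + 1 then f i else 1)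
      = (if i.val < k then f i else 1) * (if i = ⟨k, hk⟩ then f i else 1) := by
    intro i
    by_cases h1 : i.val < k
    · have h2 : i ≠ ⟨k, hk⟩ := by rintro rfl; simp at h1
      simp [h1, h2, h1.trans (Nat.lt_succ_self k)]
    · by_cases h2 : i = ⟨k, hk⟩
      · subst h2; simp
      · have h3 : ¬ i.val < k + 1 := by
          intro h
          apply h2
          ext; simp; omega
        simp [h1, h2, h3]
  simp_rw [this]
  rw [Finset.prod_mul_distrib, Finset.prod_ite_eq']
  simp

theorem multi_aux {𝕜 : Type*} [RCLike 𝕜] {N : ℕ}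
    (E : Fin N → Type*) [∀ i, NormedAddCommGroup (E i)] [∀ i, NormedSpace 𝕜 (E i)]
    (rs : Fin N → ℝ) (Cs : ℕ → ℝ) (hCs : ∀ i, 0 ≤ Cs i)
    (A : ContinuousMultilinearMap 𝕜 E 𝕜) (m : ℕ) (x : ∀ i, Fin m → E i) (n : ℕ)
    (hN : 2 * n ≤ N)
    (hbil : ∀ (i : ℕ) (hi : i < n),
      ∀ B : E ⟨2 * i, by omega⟩ →L[𝕜] E ⟨2 * i + 1, by omega⟩ →L[𝕜] 𝕜,
        ∑ j, ‖B (x _ j) (x _ j)‖ ≤ Cs i * ‖B‖ *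
          (weakNorm 𝕜 (rs ⟨2 * i, by omega⟩) (x ⟨2 * i, by omega⟩) *
            weakNorm 𝕜 (rs ⟨2 * i + 1, by omega⟩) (x ⟨2 * i + 1, by omega⟩)))
    (K : ℝ) (hK : 0 ≤ K)
    (hbase : ∀ v : ∀ i, E i, ∑ j, ‖A (fun i => if i.val < 2 * n then v i else x i j)‖
      ≤ K * ∏ i : Fin N, if i.val < 2 * n then ‖v i‖ else 1) :
    ∑ j, ‖A (fun i => x i j)‖ ≤ (∏ i ∈ Finset.range n, Cs i) * K *
      ∏ i : Fin N, if i.val < 2 * n then weakNorm 𝕜 (rs i) (x i) else 1 := by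
  induction n generalizing K with
  | zero => simpa using hbase 0
  | succ n ih =>
    have hp : 2 * n < N := by omega
    have hq : 2 * n + 1 < N := by omega
    set wp := weakNorm 𝕜 (rs ⟨2 * n, hp⟩) (x ⟨2 * n, hp⟩) with hwp
    set wq := weakNorm 𝕜 (rs ⟨2 * n + 1, hq⟩) (x ⟨2 * n + 1, hq⟩) with hwq
    have wp0 : 0 ≤ wp := weakNorm_nonneg' _ _ _
    have wq0 : 0 ≤ wq := weakNorm_nonneg' _ _ _
    have hC := hCs n
    have hpq : (⟨2 * n, hp⟩ : Fin N) ≠ ⟨2 * n + 1, hq⟩ := by simp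
    have main := ih (by omega) (fun i hi => hbil i (by omega)) (Cs n * (wp * wq) * K)
      (by positivity) ?_
    · refine main.trans (le_of_eq ?_)
      rw [Finset.prod_range_succ, show 2 * (n + 1) = 2 * n + 1 + 1 by ring,
        prod_lt_succ _ _ hq, prod_lt_succ _ _ hp]
      ring
    · intro v
      set P := ∏ i : Fin N, if i.val < 2 * n then ‖v i‖ else 1 with hP
      have hP0 : 0 ≤ P := Finset.prod_nonneg fun i _ => by split_ifs <;> positivity
      set u : Fin m → ∀ i, E i := fun j i => if i.val < 2 * n then v i else x i j with hu
      choose B hB using fun j => exists_bil A (u j) ⟨2 * n, hp⟩ ⟨2 * n + 1, hq⟩ hpq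
      have st := bil_step (x ⟨2 * n, hp⟩) (x ⟨2 * n + 1, hq⟩) (Cs n * (wp * wq)) (by positivity)
        (fun B => (hbil n (by omega) B).trans (le_of_eq (by ring))) B (K * P) (by positivity) ?_
      · have e : ∀ j, B j (x _ j) (x _ j) = A (u j) := by
          intro j
          rw [hB]
          congr 1
          rw [Function.update_eq_self_iff.mpr, Function.update_eq_self_iff.mpr]
          · simp [hu]
          · simp [hu]
        simp_rw [e] at st
        exact st.trans (le_of_eq (by ring))
      · intro a b
        have := hbase (Function.update (Function.update v ⟨2 * n, hp⟩ a) ⟨2 * n + 1, hq⟩ b)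
        have e : ∀ j, B j a b = A (fun i => if i.val < 2 * (n + 1) then
            (Function.update (Function.update v ⟨2 * n, hp⟩ a) ⟨2 * n + 1, hq⟩ b) i
            else x i j) := by
          intro j
          rw [hB]
          congr 1
          funext i
          by_cases h2 : i = ⟨2 * n + 1, hq⟩
          · subst h2
            simp [show 2 * n + 1 < 2 * (n + 1) by omega]
          by_cases h1 : i = ⟨2 * n, hp⟩
          · subst h1
            simp [Function.update_of_ne h2]
          · rw [Function.update_of_ne h2, Function.update_of_ne h1,
              Function.update_of_ne h2, Function.update_of_ne h1]
            have h1' : i.val ≠ 2 * n := fun h => h1 (Fin.ext h)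
            have h2' : i.val ≠ 2 * n + 1 := fun h => h2 (Fin.ext h)
            have : i.val < 2 * (n + 1) ↔ i.val < 2 * n := by omega
            simp [hu, this]
        simp_rw [e]
        refine this.trans (le_of_eq ?_)
        rw [show 2 * (n + 1) = 2 * n + 1 + 1 by ring,
          prod_lt_succ _ _ hq, prod_lt_succ _ _ hp]
        have : (∏ i : Fin N, if i.val < 2 * n then
            ‖Function.update (Function.update v ⟨2 * n, hp⟩ a) ⟨2 * n + 1, hq⟩ b i‖ else 1)
            = P := by
          refine Finset.prod_congr rfl fun i _ => ?_
          split_ifs with h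
          · have h1 : i ≠ ⟨2 * n, hp⟩ := by rintro rfl; simp at h
            have h2 : i ≠ ⟨2 * n + 1, hq⟩ := by rintro rfl; simp at h
            rw [Function.update_of_ne h2, Function.update_of_ne h1]
          · rfl
        rw [this, Function.update_self, Function.update_of_ne hpq, Function.update_self]
        ring

/-- **Pairwise bilinear coincidences generate multilinear coincidences.** If for each
`i = 1, …, n` every continuous bilinear form on `E_{2i−1} × E_{2i}` is absolutely
`(1; r_{2i−1}, r_{2i})`-summing with constant `C_{2i}‖B‖`, where
`1 ≤ r_{2n+1} ≤ r_1, …, r_{2n} ≤ 2`, then every continuous `2n`-linear form on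
`E₁ × ⋯ × E_{2n}` is absolutely `(1; r₁, …, r_{2n})`-summing with constant
`C₂⋯C_{2n}‖A‖`, and every continuous `(2n+1)`-linear form on `E₁ × ⋯ × E_{2n+1}` is
absolutely `(r_{2n+1}; r₁, …, r_{2n+1})`-summing with constant `C₂⋯C_{2n}‖A‖`. -/
theorem pairwise_bilinear_to_multilinear {𝕜 : Type*} [RCLike 𝕜] (n : ℕ) (hn : 1 ≤ n)
    (E : Fin (2 * n + 1) → Type*) [∀ i, NormedAddCommGroup (E i)] [∀ i, NormedSpace 𝕜 (E i)]
    [∀ i, CompleteSpace (E i)]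
    (rs : Fin (2 * n + 1) → ℝ)
    (hlast : 1 ≤ rs ⟨2 * n, by omega⟩)
    (hrs : ∀ i : Fin (2 * n + 1), i.val < 2 * n → rs ⟨2 * n, by omega⟩ ≤ rs i ∧ rs i ≤ 2)
    (Cs : Fin n → ℝ) (hCs : ∀ i, 0 < Cs i)
    (hbil : ∀ i : Fin n,
      ∀ B : E ⟨2 * i.val, by have := i.isLt; omega⟩ →L[𝕜]
            E ⟨2 * i.val + 1, by have := i.isLt; omega⟩ →L[𝕜] 𝕜,
      ∀ (m : ℕ) (x : Fin m → E ⟨2 * i.val, by have := i.isLt; omega⟩)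
        (y : Fin m → E ⟨2 * i.val + 1, by have := i.isLt; omega⟩),
        ∑ j, ‖B (x j) (y j)‖ ≤ Cs i * ‖B‖ *
          (weakNorm 𝕜 (rs ⟨2 * i.val, by have := i.isLt; omega⟩) x *
            weakNorm 𝕜 (rs ⟨2 * i.val + 1, by have := i.isLt; omega⟩) y)) :
    (∀ A : ContinuousMultilinearMap 𝕜 (fun i : Fin (2 * n) => E (Fin.castSucc i)) 𝕜,
      ∀ (m : ℕ) (x : ∀ i : Fin (2 * n), Fin m → E (Fin.castSucc i)),
        ∑ j, ‖A (fun i => x i j)‖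
          ≤ (∏ i, Cs i) * ‖A‖ * ∏ i, weakNorm 𝕜 (rs (Fin.castSucc i)) (x i)) ∧
    (∀ A : ContinuousMultilinearMap 𝕜 E 𝕜,
      ∀ (m : ℕ) (x : ∀ i, Fin m → E i),
        (∑ j, ‖A (fun i => x i j)‖ ^ rs ⟨2 * n, by omega⟩) ^ (1 / rs ⟨2 * n, by omega⟩)
          ≤ (∏ i, Cs i) * ‖A‖ * ∏ i, weakNorm 𝕜 (rs i) (x i)) := by
  classical
  set Cn : ℕ → ℝ := fun i => if h : i < n then Cs ⟨i, h⟩ else 0 with hCn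
  have hCn0 : ∀ i, 0 ≤ Cn i := by
    intro i
    simp only [hCn]
    split_ifs with h
    · exact (hCs _).le
    · exact le_rfl
  have hCe : ∀ i (h : i < n), Cn i = Cs ⟨i, h⟩ := fun i h => by simp [hCn, h]
  have hprod : ∏ i ∈ Finset.range n, Cn i = ∏ i, Cs i := by
    rw [Finset.prod_range]
    exact Finset.prod_congr rfl fun i _ => hCe i.1 i.2
  constructor
  · intro A m x
    obtain ⟨k, rfl⟩ : ∃ k, n = k + 1 := ⟨n - 1, by omega⟩
    have hp : 2 * k < 2 * (k + 1) := by omega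
    have hq : 2 * k + 1 < 2 * (k + 1) := by omega
    have hpq : (⟨2 * k, hp⟩ : Fin (2 * (k + 1))) ≠ ⟨2 * k + 1, hq⟩ := by simp
    set wp := weakNorm 𝕜 (rs (Fin.castSucc ⟨2 * k, hp⟩)) (x ⟨2 * k, hp⟩) with hwp
    set wq := weakNorm 𝕜 (rs (Fin.castSucc ⟨2 * k + 1, hq⟩)) (x ⟨2 * k + 1, hq⟩) with hwq
    have wp0 : 0 ≤ wp := weakNorm_nonneg' _ _ _
    have wq0 : 0 ≤ wq := weakNorm_nonneg' _ _ _
    have hC := hCn0 k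
    have key := multi_aux (fun i : Fin (2 * (k + 1)) => E (Fin.castSucc i))
      (fun i => rs (Fin.castSucc i)) Cn hCn0 A m x k (by omega) ?_
      (Cn k * ‖A‖ * (wp * wq)) (by positivity) ?_
    · refine key.trans (le_of_eq ?_)
      have hall : (∏ i : Fin (2 * (k + 1)), weakNorm 𝕜 (rs (Fin.castSucc i)) (x i))
          = ∏ i : Fin (2 * (k + 1)), if i.val < 2 * k + 1 + 1 then
              weakNorm 𝕜 (rs (Fin.castSucc i)) (x i) else 1 := by
        refine Finset.prod_congr rfl fun i _ => ?_
        rw [if_pos (by have := i.isLt; omega)]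
      rw [hall, prod_lt_succ _ _ hq, prod_lt_succ _ _ hp, ← hprod, Finset.prod_range_succ]
      ring
    · intro i hi B
      rw [hCe i (by omega)]
      exact hbil ⟨i, by omega⟩ B m _ _
    · intro v
      set P := ∏ i : Fin (2 * (k + 1)), if i.val < 2 * k then ‖v i‖ else 1 with hP
      have hP0 : 0 ≤ P := Finset.prod_nonneg fun i _ => by split_ifs <;> positivity
      obtain ⟨B, hB⟩ := exists_bil A v ⟨2 * k, hp⟩ ⟨2 * k + 1, hq⟩ hpq
      have hBn : ‖B‖ ≤ ‖A‖ * P := by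
        refine ContinuousLinearMap.opNorm_le_bound₂ _ (by positivity) ?_
        intro a b
        rw [hB]
        refine (A.le_opNorm _).trans (le_of_eq ?_)
        have hall : (∏ i, ‖Function.update (Function.update v ⟨2 * k, hp⟩ a) ⟨2 * k + 1, hq⟩ b i‖)
            = ∏ i : Fin (2 * (k + 1)), if i.val < 2 * k + 1 + 1 then
              ‖Function.update (Function.update v ⟨2 * k, hp⟩ a) ⟨2 * k + 1, hq⟩ b i‖ else 1 := by
          refine Finset.prod_congr rfl fun i _ => ?_
          rw [if_pos (by have := i.isLt; omega)]
        have hlow : (∏ i : Fin (2 * (k + 1)), if i.val < 2 * k then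
            ‖Function.update (Function.update v ⟨2 * k, hp⟩ a) ⟨2 * k + 1, hq⟩ b i‖ else 1)
            = P := by
          refine Finset.prod_congr rfl fun i _ => ?_
          split_ifs with h
          · have h1 : i ≠ ⟨2 * k, hp⟩ := by rintro rfl; simp at h
            have h2 : i ≠ ⟨2 * k + 1, hq⟩ := by rintro rfl; simp at h
            rw [Function.update_of_ne h2, Function.update_of_ne h1]
          · rfl
        rw [hall, prod_lt_succ _ _ hq, prod_lt_succ _ _ hp, hlow, Function.update_self,
          Function.update_of_ne hpq, Function.update_self]
        ring
      have hb := hbil ⟨k, by omega⟩ B m (x ⟨2 * k, hp⟩) (x ⟨2 * k + 1, hq⟩)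
      have e : ∀ j, A (fun i => if i.val < 2 * k then v i else x i j)
          = B (x ⟨2 * k, hp⟩ j) (x ⟨2 * k + 1, hq⟩ j) := by
        intro j
        rw [hB]
        congr 1
        funext i
        by_cases h2 : i = ⟨2 * k + 1, hq⟩
        · subst h2; simp
        by_cases h1 : i = ⟨2 * k, hp⟩
        · subst h1; simp [Function.update_of_ne h2]
        · rw [Function.update_of_ne h2, Function.update_of_ne h1, if_pos]
          have h1' : i.val ≠ 2 * k := fun h => h1 (Fin.ext h)
          have h2' : i.val ≠ 2 * k + 1 := fun h => h2 (Fin.ext h)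
          have := i.isLt
          omega
      simp_rw [e]
      refine hb.trans ?_
      rw [← hCe k (by omega)]
      change Cn k * ‖B‖ * (wp * wq) ≤ _
      calc Cn k * ‖B‖ * (wp * wq) ≤ Cn k * (‖A‖ * P) * (wp * wq) := by gcongr
        _ = _ := by ring
  · intro A m x
    have hl : 2 * n < 2 * n + 1 := by omega
    set L : Fin (2 * n + 1) := ⟨2 * n, hl⟩ with hL
    set r := rs L with hr
    have hr1 : 1 ≤ r := hlast
    have hr0 : 0 < r := by linarith
    set a : Fin m → ℝ := fun j => ‖A (fun i => x i j)‖ with ha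
    have ha0 : ∀ j, 0 ≤ a j := fun j => norm_nonneg _
    set S := ∑ j, a j ^ r with hS
    have hS0 : 0 ≤ S := Finset.sum_nonneg fun j _ => Real.rpow_nonneg (ha0 j) _
    set w := weakNorm 𝕜 r (x L) with hw
    have w0 : 0 ≤ w := weakNorm_nonneg' _ _ _
    set lam : Fin m → ℝ := fun j => a j ^ (r - 1) with hlam
    have lam0 : ∀ j, 0 ≤ lam j := fun j => Real.rpow_nonneg (ha0 j) _
    set z : Fin m → E L := fun j => ((lam j : ℝ) : 𝕜) • x L j with hz
    set x' := Function.update x L z with hx'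
    have hx'L : x' L = z := Function.update_self ..
    have hx'ne : ∀ i : Fin (2 * n + 1), i.val < 2 * n → x' i = x i := by
      intro i hi
      refine Function.update_of_ne ?_ _ _
      rintro rfl
      simp [hL] at hi
    have hW0 : 0 ≤ S ^ ((r - 1) / r) := Real.rpow_nonneg hS0 _
    have hW : ∀ φ : E L →L[𝕜] 𝕜, ∑ j, ‖φ (z j)‖ ≤ S ^ ((r - 1) / r) * w * ‖φ‖ := by
      intro φ
      have e : ∀ j, ‖φ (z j)‖ = a j ^ (r - 1) * ‖φ (x L j)‖ := by
        intro j
        simp only [hz, map_smul, norm_smul, RCLike.norm_ofReal, abs_of_nonneg (lam0 j)]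
        rfl
      simp_rw [e]
      refine (holder_aux r hr1 a _ ha0 fun j => norm_nonneg _).trans ?_
      rw [mul_assoc]
      exact mul_le_mul_of_nonneg_left (le_weakNorm_mul 𝕜 r hr1 (x L) φ) hW0
    have key := multi_aux E rs Cn hCn0 A m x' n (by omega) ?_
      (‖A‖ * (S ^ ((r - 1) / r) * w)) (by positivity) ?_
    · have hlow : (∏ i : Fin (2 * n + 1), if i.val < 2 * n then weakNorm 𝕜 (rs i) (x' i) else 1)
          = ∏ i : Fin (2 * n + 1), if i.val < 2 * n then weakNorm 𝕜 (rs i) (x i) else 1 := by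
        refine Finset.prod_congr rfl fun i _ => ?_
        split_ifs with h
        · rw [hx'ne i h]
        · rfl
      have hall : (∏ i : Fin (2 * n + 1), weakNorm 𝕜 (rs i) (x i))
          = (∏ i : Fin (2 * n + 1), if i.val < 2 * n then weakNorm 𝕜 (rs i) (x i) else 1) * w := by
        rw [hw, hr, hL, ← prod_lt_succ (fun i => weakNorm 𝕜 (rs i) (x i)) (2 * n) hl]
        refine Finset.prod_congr rfl fun i _ => ?_
        rw [if_pos i.isLt]
      have hsum : ∑ j, ‖A (fun i => x' i j)‖ = S := by
        refine Finset.sum_congr rfl fun j _ => ?_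
        have e : (fun i => x' i j)
            = Function.update (fun i => x i j) L (((lam j : ℝ) : 𝕜) • x L j) := by
          funext i
          by_cases h : i = L
          · subst h; simp [hx', hz]
          · simp [hx', Function.update_of_ne h]
        rw [e, A.map_update_smul, norm_smul, RCLike.norm_ofReal, abs_of_nonneg (lam0 j),
          Function.update_eq_self]
        change a j ^ (r - 1) * a j = a j ^ r
        rcases (ha0 j).eq_or_lt with h | h
        · rw [← h, mul_zero, Real.zero_rpow hr0.ne']
        · rw [Real.rpow_sub_one h.ne', div_mul_cancel₀ _ h.ne']
      rw [hsum, hlow, hprod] at key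
      rw [hall]
      change S ^ (1 / r) ≤ _
      set Q := ∏ i : Fin (2 * n + 1), if i.val < 2 * n then weakNorm 𝕜 (rs i) (x i) else 1 with hQ
      have hQ0 : 0 ≤ Q := Finset.prod_nonneg fun i _ => by
        split_ifs
        · exact weakNorm_nonneg' _ _ _
        · exact zero_le_one
      have hC0 : 0 ≤ ∏ i, Cs i := Finset.prod_nonneg fun i _ => (hCs i).le
      rcases hS0.eq_or_lt with h | h
      · rw [← h, Real.zero_rpow (by positivity)]
        positivity
      · have hpos : 0 < S ^ ((r - 1) / r) := Real.rpow_pos_of_pos h _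
        refine le_of_mul_le_mul_left ?_ hpos
        rw [← Real.rpow_add h, show (r - 1) / r + 1 / r = 1 by field_simp; ring, Real.rpow_one]
        exact key.trans (le_of_eq (by ring))
    · intro i hi B
      rw [hCe i hi]
      exact hbil ⟨i, hi⟩ B m _ _
    · intro v
      set P := ∏ i : Fin (2 * n + 1), if i.val < 2 * n then ‖v i‖ else 1 with hP
      have hP0 : 0 ≤ P := Finset.prod_nonneg fun i _ => by split_ifs <;> positivity
      set φ : E L →L[𝕜] 𝕜 := A.toContinuousLinearMap v L with hφ
      have hφa : ∀ b, φ b = A (Function.update v L b) := fun b => rfl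
      have hφn : ‖φ‖ ≤ ‖A‖ * P := by
        refine ContinuousLinearMap.opNorm_le_bound _ (by positivity) ?_
        intro b
        rw [hφa]
        refine (A.le_opNorm _).trans (le_of_eq ?_)
        have hall : (∏ i, ‖Function.update v L b i‖) = P * ‖b‖ := by
          have h1 : (∏ i, ‖Function.update v L b i‖) = ∏ i : Fin (2 * n + 1),
              if i.val < 2 * n + 1 then ‖Function.update v L b i‖ else 1 := by
            refine Finset.prod_congr rfl fun i _ => ?_
            rw [if_pos i.isLt]
          rw [h1, prod_lt_succ _ _ hl, ← hL, Function.update_self]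
          congr 1
          refine Finset.prod_congr rfl fun i _ => ?_
          split_ifs with h
          · have h1 : i ≠ L := by rintro rfl; simp [hL] at h
            rw [Function.update_of_ne h1]
          · rfl
        rw [hall]
        ring
      have e : ∀ j, A (fun i => if i.val < 2 * n then v i else x' i j) = φ (z j) := by
        intro j
        rw [hφa]
        congr 1
        funext i
        by_cases h : i = L
        · subst h
          rw [Function.update_self, hx'L, if_neg (by simp [hL])]
        · have h1 : i.val < 2 * n := by
            have h1' : i.val ≠ 2 * n := fun h' => h (Fin.ext h')
            have := i.isLt
            omega
          rw [Function.update_of_ne h, if_pos h1]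
      simp_rw [e]
      refine (hW φ).trans ?_
      calc S ^ ((r - 1) / r) * w * ‖φ‖ ≤ S ^ ((r - 1) / r) * w * (‖A‖ * P) := by gcongr
        _ = _ := by ring
end

section
/- Let n ≥ 2, 1 < p ≤ 2, and 𝕂 = ℝ or ℂ. Then every continuous n-linear form A : ℓ_1 × ⋯ × ℓ_1 × ℓ_p → 𝕂 (with n−1 factors equal to ℓ_1) is absolutely (r;r,…,r)-summing for every 1 ≤ r ≤ 2^{n−1}/(2^{n−1}−1). -/
open scoped BigOperators NNReal ENNReal

/-- The exponent family for `ℓ₁ × ⋯ × ℓ₁ × ℓ_p` (`n − 1` factors `ℓ₁`, last factor `ℓ_p`). -/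
noncomputable def pexp (n : ℕ) (p : ℝ) (i : Fin n) : ℝ≥0∞ :=
  if i.val + 1 < n then 1 else ENNReal.ofReal p

lemma aux_sq {𝕜 : Type*} [RCLike 𝕜] (z S : 𝕜) :
    ‖z + S‖^2 + ‖-z+S‖^2 = 2 * (‖z‖^2+‖S‖^2) := by
  have := parallelogram_law_with_norm 𝕜 S z
  rw [show -z + S = S - z by ring, add_comm z S]
  nlinarith

lemma aux_four {𝕜 : Type*} [RCLike 𝕜] (z S : 𝕜) :
    ‖z + S‖^4 + ‖-z+S‖^4 ≤ 2 * (‖z‖^4+6*‖z‖^2*‖S‖^2+‖S‖^4) := by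
  have h1 := @norm_add_sq 𝕜 𝕜 _ _ _ z S
  have h2 := @norm_add_sq 𝕜 𝕜 _ _ _ (-z) S
  have h4 : |RCLike.re (inner 𝕜 z S)| ≤ ‖z‖ * ‖S‖ :=
    (RCLike.abs_re_le_norm _).trans (norm_inner_le_norm z S)
  rw [inner_neg_left, map_neg, norm_neg] at h2
  set q := RCLike.re (inner 𝕜 z S)
  have h5 : q^2 ≤ (‖z‖ * ‖S‖)^2 := sq_le_sq' (abs_le.1 h4).1 (abs_le.1 h4).2
  rw [show ‖z+S‖^4 = (‖z+S‖^2)^2 by ring, show ‖-z+S‖^4 = (‖-z+S‖^2)^2 by ring, h1, h2]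
  nlinarith

lemma signs (𝕜 : Type*) [RCLike 𝕜] (m : ℕ) : ∃ N : ℕ, 0 < N ∧ ∃ ε : Fin N → Fin m → 𝕜,
    (∀ ω i, ‖ε ω i‖ = 1) ∧ ∀ a : Fin m → 𝕜,
      (∑ ω, ‖∑ i, ε ω i * a i‖^2 = N * ∑ i, ‖a i‖^2) ∧
      (∑ ω, ‖∑ i, ε ω i * a i‖^4 ≤ 3 * N * (∑ i, ‖a i‖^2)^2) := by
  induction m with
  | zero => exact ⟨1, one_pos, fun _ _ => 1, by simp, by simp⟩
  | succ m ih =>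
    obtain ⟨N, hN, ε, h1, h2⟩ := ih
    refine ⟨N + N, by omega, Fin.addCases (fun ω => Fin.cons 1 (ε ω))
      (fun ω => Fin.cons (-1) (ε ω)), ?_, ?_⟩
    · intro ω i
      refine Fin.addCases (fun ω => ?_) (fun ω => ?_) ω
      · beta_reduce; rw [Fin.addCases_left]
        refine Fin.cases ?_ (fun i => ?_) i <;> simp [h1]
      · beta_reduce; rw [Fin.addCases_right]
        refine Fin.cases ?_ (fun i => ?_) i <;> simp [h1]
    · intro a
      obtain ⟨h3, h4⟩ := h2 (fun i => a i.succ)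
      simp only [Fin.sum_univ_add, Fin.addCases_left, Fin.addCases_right, Fin.sum_univ_succ (n := m),
        Fin.cons_zero, Fin.cons_succ, one_mul, neg_mul, ← Finset.sum_add_distrib]
      constructor
      · simp only [aux_sq]
        rw [← Finset.mul_sum, Finset.sum_add_distrib, h3]
        simp
        ring
      · refine (Finset.sum_le_sum fun ω _ => aux_four _ _).trans ?_
        rw [← Finset.mul_sum, Finset.sum_add_distrib, Finset.sum_add_distrib, ← Finset.mul_sum, h3]
        simp
        nlinarith [mul_nonneg (Nat.cast_nonneg (α := ℝ) N) (pow_nonneg (norm_nonneg (a 0)) 4)]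

lemma aux_pt (t τ r : ℝ) (ht : 0 ≤ t) (hτ : 0 < τ) (h1 : 1 ≤ r) (h2 : r ≤ 2) :
    t^2 ≤ τ^(2-r) * t^r + t^4/τ^2 := by
  rcases le_total t τ with h | h
  · have : t^2 ≤ τ^(2-r) * t^r := by
      rcases ht.eq_or_lt with rfl | ht
      · simp only [ne_eq, OfNat.ofNat_ne_zero, not_false_eq_true, zero_pow]; positivity
      calc t^2 = t^(2-r) * t^r := by
            rw [← Real.rpow_add ht]; norm_num
        _ ≤ _ := by gcongr
    have : 0 ≤ t^4/τ^2 := by positivity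
    linarith
  · have : t^2 ≤ t^4/τ^2 := by
      rw [le_div_iff₀ (by positivity)]
      calc t^2*τ^2 ≤ t^2*t^2 := by gcongr
        _ = _ := by ring
    have : 0 ≤ τ^(2-r) * t^r := by positivity
    linarith

lemma khin {𝕜 : Type*} [RCLike 𝕜] {m N : ℕ} (ε : Fin N → Fin m → 𝕜) (a : Fin m → 𝕜)
    (h2 : ∑ ω, ‖∑ i, ε ω i * a i‖^2 = N * ∑ i, ‖a i‖^2)
    (h4 : ∑ ω, ‖∑ i, ε ω i * a i‖^4 ≤ 3 * N * (∑ i, ‖a i‖^2)^2)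
    (r : ℝ) (hr1 : 1 ≤ r) (hr2 : r ≤ 2) :
    N * (∑ i, ‖a i‖^2)^(r/2) ≤ 5 * ∑ ω, ‖∑ i, ε ω i * a i‖^r := by
  obtain ⟨σ, hσ, hs⟩ : ∃ σ : ℝ, 0 ≤ σ ∧ ∑ i, ‖a i‖^2 = σ^2 :=
    ⟨√(∑ i, ‖a i‖^2), Real.sqrt_nonneg _, (Real.sq_sqrt (by positivity)).symm⟩
  rw [hs] at h2 h4 ⊢
  have hσr : (σ^2)^(r/2) = σ^r := by
    rw [← Real.rpow_natCast, ← Real.rpow_mul hσ]; congr 1; push_cast; ring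
  rw [hσr]
  rcases hσ.eq_or_lt with rfl | hσ0
  · rw [Real.zero_rpow (by linarith)]; simp; positivity
  have key := Finset.sum_le_sum (s := Finset.univ) fun ω _ =>
    aux_pt ‖∑ i, ε ω i * a i‖ (3*σ) r (norm_nonneg _) (by positivity) hr1 hr2
  rw [Finset.sum_add_distrib, ← Finset.mul_sum, ← Finset.sum_div, h2] at key
  set T := ∑ ω, ‖∑ i, ε ω i * a i‖^r
  have hT : 0 ≤ T := by positivity
  have e1 : (∑ ω, ‖∑ i, ε ω i * a i‖^4) / (3*σ)^2 ≤ N * σ^2 / 3 := by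
    rw [div_le_iff₀ (by positivity)]
    refine h4.trans (le_of_eq (by ring))
  have e2 : (3*σ)^(2-r) ≤ 3 * σ^(2-r) := by
    rw [Real.mul_rpow (by norm_num) hσ]
    gcongr
    calc (3:ℝ)^(2-r) ≤ 3^(1:ℝ) := by apply Real.rpow_le_rpow_of_exponent_le <;> linarith
      _ = 3 := by simp
  have e3 : σ^2 = σ^(2-r) * σ^r := by
    rw [← Real.rpow_add hσ0]; norm_num
  have e4 : (3*σ)^(2-r) * T ≤ 3 * σ^(2-r) * T := by gcongr
  have e5 : σ^(2-r) * (N * σ^r) ≤ σ^(2-r) * (5 * T) := by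
    have : 0 ≤ σ^(2-r) * T := by positivity
    have : σ^(2-r) * (N * σ^r) = N * σ^2 := by rw [e3]; ring
    rw [this]; linarith
  exact le_of_mul_le_mul_left e5 (by positivity)

section weak
variable {𝕜 : Type*} [RCLike 𝕜] {E : Type*} [NormedAddCommGroup E] [NormedSpace 𝕜 E]

lemma weak_bdd (r : ℝ) (hr : 0 < r) {m : ℕ} (x : Fin m → E) :
    BddAbove (Set.range fun φ : {φ : E →L[𝕜] 𝕜 // ‖φ‖ ≤ 1} => (∑ j, ‖φ.1 (x j)‖ ^ r) ^ (1 / r)) := by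
  refine ⟨(∑ j, ‖x j‖ ^ r) ^ (1 / r), ?_⟩
  rintro _ ⟨φ, rfl⟩
  dsimp only
  gcongr with j
  exact (φ.1.le_opNorm _).trans (mul_le_of_le_one_left (norm_nonneg _) φ.2)

lemma weak_nonneg (r : ℝ) {m : ℕ} (x : Fin m → E) : 0 ≤ weakNorm 𝕜 r x :=
  Real.iSup_nonneg fun φ => by positivity

lemma weak_le (r : ℝ) (hr : 0 < r) {m : ℕ} (x : Fin m → E) (φ : E →L[𝕜] 𝕜) (M : ℝ) (hM : 0 ≤ M)
    (h : ‖φ‖ ≤ M) : ∑ j, ‖φ (x j)‖ ^ r ≤ (M * weakNorm 𝕜 r x) ^ r := by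
  rcases hM.eq_or_lt with rfl | hM0
  · have : φ = 0 := by simpa using h
    subst this
    simp [Real.zero_rpow hr.ne']
  have h1 : ‖(((M⁻¹ : ℝ) : 𝕜)) • φ‖ ≤ 1 := by
    rw [norm_smul, RCLike.norm_ofReal, abs_of_pos (by positivity)]
    rw [inv_mul_le_iff₀ hM0]; simpa using h
  have h2 := le_ciSup (weak_bdd r hr x) ⟨_, h1⟩
  change _ ≤ weakNorm 𝕜 r x at h2
  simp only [smul_apply, norm_smul, RCLike.norm_ofReal] at h2
  rw [abs_of_pos (inv_pos.2 hM0)] at h2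
  have h3 := Real.rpow_le_rpow (by positivity) h2 hr.le
  rw [← Real.rpow_mul (by positivity), one_div_mul_cancel hr.ne', Real.rpow_one] at h3
  rw [Real.mul_rpow hM (weak_nonneg r x)]
  calc ∑ j, ‖φ (x j)‖ ^ r = M^r * ∑ j, (M⁻¹ * ‖φ (x j)‖)^r := by
        rw [Finset.mul_sum]
        refine Finset.sum_congr rfl fun j _ => ?_
        rw [← Real.mul_rpow hM (by positivity)]
        congr 1; field_simp
    _ ≤ _ := by gcongr

end weak

section l1
variable {𝕜 : Type*} [RCLike 𝕜]

lemma l1_norm_le {G : Type*} [NormedAddCommGroup G] [NormedSpace 𝕜 G] [Fact ((1:ℝ≥0∞) ≤ 1)]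
    (T : lp (fun _ : ℕ => 𝕜) 1 →L[𝕜] G) (M : ℝ) (h : ∀ k, ‖T (lp.single 1 k 1)‖ ≤ M)
    (x : lp (fun _ : ℕ => 𝕜) 1) : ‖T x‖ ≤ M * ‖x‖ := by
  have h1 := (lp.hasSum_single (by simp) x).mapL T
  have h2 := (lp.hasSum_norm (by simp) x).mul_left M
  simp only [ENNReal.toReal_one, Real.rpow_one] at h2
  refine h1.norm_le_of_bounded h2 fun k => ?_
  have : lp.single (E := fun _ : ℕ => 𝕜) 1 k (x k) = (x k) • lp.single (E := fun _ : ℕ => 𝕜) 1 k 1 := by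
    rw [← lp.single_smul]; simp
  rw [this, map_smul, norm_smul, mul_comm]
  gcongr
  exact h k

lemma l1_fun [Fact ((1:ℝ≥0∞) ≤ 1)] (g : ℕ → 𝕜) (M : ℝ) (hM : 0 ≤ M) (h : ∀ k, ‖g k‖ ≤ M) :
    ∃ ψ : lp (fun _ : ℕ => 𝕜) 1 →L[𝕜] 𝕜, ‖ψ‖ ≤ M ∧ ∀ k, ψ (lp.single 1 k 1) = g k := by
  have hb : ∀ x : lp (fun _ : ℕ => 𝕜) 1, HasSum (fun k => M * ‖x k‖) (M * ‖x‖) := fun x => by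
    have h2 := (lp.hasSum_norm (by simp) x).mul_left M
    simpa only [ENNReal.toReal_one, Real.rpow_one] using h2
  have hle : ∀ (x : lp (fun _ : ℕ => 𝕜) 1) k, ‖g k * x k‖ ≤ M * ‖x k‖ := fun x k => by
    rw [norm_mul]; gcongr; exact h k
  have hs : ∀ x : lp (fun _ : ℕ => 𝕜) 1, Summable fun k => g k * x k := fun x =>
    Summable.of_norm_bounded (hb x).summable (hle x)
  let L : lp (fun _ : ℕ => 𝕜) 1 →ₗ[𝕜] 𝕜 :=
    { toFun := fun x => ∑' k, g k * x k
      map_add' := fun x y => by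
        rw [← (hs x).tsum_add (hs y)]
        simp [mul_add]
      map_smul' := fun c x => by
        simp only [lp.coeFn_smul, Pi.smul_apply, smul_eq_mul, RingHom.id_apply]
        rw [← tsum_mul_left]
        congr 1; ext k; ring }
  have hL : ∀ x, ‖L x‖ ≤ M * ‖x‖ := fun x => tsum_of_norm_bounded (hb x) (hle x)
  refine ⟨L.mkContinuous M hL, L.mkContinuous_norm_le hM hL, fun k => ?_⟩
  change ∑' l, g l * (lp.single (E := fun _ : ℕ => 𝕜) 1 k 1) l = g k
  rw [tsum_eq_single k]
  · simp
  · intro l hl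
    rw [lp.single_apply_ne _ _ _ hl, mul_zero]

lemma l1_apriori [Fact ((1:ℝ≥0∞) ≤ 1)] {N : ℕ} (f : Fin N → lp (fun _ : ℕ => 𝕜) 1 →L[𝕜] 𝕜)
    (hf : ∀ k, ∑ i, ‖f i (lp.single 1 k 1)‖^2 ≤ 1) (x : lp (fun _ : ℕ => 𝕜) 1) :
    ∑ i, ‖f i x‖^2 ≤ ‖x‖^2 := by
  let T : lp (fun _ : ℕ => 𝕜) 1 →L[𝕜] EuclideanSpace 𝕜 (Fin N) :=
    ((EuclideanSpace.equiv (Fin N) 𝕜).symm : (Fin N → 𝕜) →L[𝕜] EuclideanSpace 𝕜 (Fin N)) ∘L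
      ContinuousLinearMap.pi f
  have hT : ∀ x, ‖T x‖^2 = ∑ i, ‖f i x‖^2 := fun x => by
    rw [EuclideanSpace.norm_sq_eq]; rfl
  have := l1_norm_le T 1 (fun k => by
    rw [← abs_of_nonneg (norm_nonneg (T _)), ← sq_le_one_iff_abs_le_one, hT]; exact hf k) x
  rw [← hT]
  gcongr; simpa using this

end l1

lemma rpow_two_bound (a b r : ℝ) (ha : 0 ≤ a) (hb : 0 ≤ b) (h1 : 1 ≤ r) (h2 : r ≤ 2) :
    (a+b)^r ≤ 2 * (a^r+b^r) := by
  lift a to ℝ≥0 using ha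
  lift b to ℝ≥0 using hb
  have h := NNReal.rpow_add_le_mul_rpow_add_rpow a b h1
  have h : ((a:ℝ)+b)^r ≤ 2^(r-1) * ((a:ℝ)^r+(b:ℝ)^r) := by exact_mod_cast h
  refine h.trans ?_
  gcongr
  calc (2:ℝ)^(r-1) ≤ 2^(1:ℝ) := by apply Real.rpow_le_rpow_of_exponent_le <;> linarith
    _ = 2 := by simp

lemma pow_mean {N : ℕ} (hN : 0 < N) (t : Fin N → ℝ) (ht : ∀ i, 0 ≤ t i) (r : ℝ) (h1 : 1 ≤ r)
    (h2 : r ≤ 2) : ∑ i, t i ^ r ≤ N * ((∑ i, t i^2) / N)^(r/2) := by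
  have hN' : (0:ℝ) < N := by exact_mod_cast hN
  have h := Real.arith_mean_le_rpow_mean Finset.univ (fun _ : Fin N => (1:ℝ)/N) (fun i => t i ^ r)
    (fun i _ => by positivity) (by simp [hN'.ne']) (fun i _ => Real.rpow_nonneg (ht i) _)
    (p := 2/r) (by rw [le_div_iff₀] <;> linarith)
  have e : ∀ i, (t i ^ r)^(2/r) = t i ^ 2 := fun i => by
    rw [← Real.rpow_mul (ht i), mul_div_cancel₀ _ (by linarith)]; norm_num
  simp only [e] at h
  rw [← Finset.mul_sum, ← Finset.mul_sum, one_div_mul_eq_div, one_div_mul_eq_div, one_div_div,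
    div_le_iff₀ hN'] at h
  linarith

lemma groth_step {𝕜 : Type*} [RCLike 𝕜] [Fact ((1:ℝ≥0∞) ≤ 1)] (r : ℝ) (hr1 : 1 ≤ r) (hr2 : r ≤ 2)
    {m : ℕ} (x : Fin m → lp (fun _ : ℕ => 𝕜) 1) (s : ℝ)
    (hs : ∀ (N : ℕ) (f : Fin N → lp (fun _ : ℕ => 𝕜) 1 →L[𝕜] 𝕜),
      (∀ k, ∑ i, ‖f i (lp.single 1 k 1)‖^2 ≤ 1) → ∑ j, (∑ i, ‖f i (x j)‖^2)^(r/2) ≤ s)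
    (n : ℕ) (f : Fin n → lp (fun _ : ℕ => 𝕜) 1 →L[𝕜] 𝕜)
    (hf : ∀ k, ∑ i, ‖f i (lp.single 1 k 1)‖^2 ≤ 1) :
    ∑ j, (∑ i, ‖f i (x j)‖^2)^(r/2) ≤ 10 * (40 * weakNorm 𝕜 r x)^r + s / 2 := by
  obtain ⟨N, hN, ε, -, hε⟩ := signs 𝕜 n
  have hN' : (0:ℝ) < N := by exact_mod_cast hN
  set w := weakNorm 𝕜 r x
  let G : Fin N → lp (fun _ : ℕ => 𝕜) 1 →L[𝕜] 𝕜 := fun ω => ∑ i, ε ω i • f i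
  have hG : ∀ ω z, G ω z = ∑ i, ε ω i * f i z := fun ω z => by simp [G]
  have hψ : ∀ ω, ∃ ψ : lp (fun _ : ℕ => 𝕜) 1 →L[𝕜] 𝕜, ‖ψ‖ ≤ 40 ∧ ∀ k, ψ (lp.single 1 k 1) =
      if ‖G ω (lp.single 1 k 1)‖ ≤ 40 then G ω (lp.single 1 k 1) else 0 := fun ω =>
    l1_fun _ 40 (by norm_num) (fun k => by split_ifs with h <;> simp [h])
  choose ψ hψ1 hψ2 using hψ
  let c : ℝ := 20 / √N
  have hc : c^2 = 400 / N := by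
    simp only [c]; rw [div_pow, Real.sq_sqrt hN'.le]; norm_num
  let H : Fin N → lp (fun _ : ℕ => 𝕜) 1 →L[𝕜] 𝕜 := fun ω => (c : 𝕜) • (G ω - ψ ω)
  have hH : ∀ ω z, ‖H ω z‖^2 = 400 / N * ‖G ω z - ψ ω z‖^2 := fun ω z => by
    rw [← hc]
    simp only [H, smul_apply, sub_apply, norm_smul, mul_pow, RCLike.norm_ofReal, sq_abs]
  have h1 := hs N H (fun k => by
    simp only [hH]
    rw [← Finset.mul_sum]
    have : ∀ ω, ‖G ω (lp.single 1 k 1) - ψ ω (lp.single 1 k 1)‖^2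
        ≤ ‖∑ i, ε ω i * f i (lp.single 1 k 1)‖^4 / 1600 := fun ω => by
      rw [hψ2, ← hG]
      split_ifs with h
      · simp; positivity
      · rw [sub_zero, le_div_iff₀ (by norm_num)]
        push Not at h
        calc _ ≤ ‖G ω (lp.single 1 k 1)‖^2 * ‖G ω (lp.single 1 k 1)‖^2 := by
              gcongr; nlinarith
          _ = _ := by ring
    have h4 := Finset.sum_le_sum (s := Finset.univ) fun ω _ => this ω
    rw [← Finset.sum_div] at h4
    have h5 := (hε (fun i => f i (lp.single 1 k 1))).2
    have h6 : (∑ i, ‖f i (lp.single 1 k 1)‖^2)^2 ≤ 1 := pow_le_one₀ (by positivity) (hf k)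
    have h7 : 3 * N * (∑ i, ‖f i (lp.single 1 k 1)‖^2)^2 ≤ 3 * (N:ℝ) * 1 := by gcongr
    rw [div_mul_eq_mul_div, div_le_one hN']
    linarith)
  have h2 : ∀ j, N * (∑ i, ‖f i (x j)‖^2)^(r/2) ≤
      10 * ∑ ω, ‖ψ ω (x j)‖^r + N / 2 * (∑ ω, ‖H ω (x j)‖^2)^(r/2) := fun j => by
    have k1 := khin ε (fun i => f i (x j)) (hε _).1 (hε _).2 r hr1 hr2
    have k2 : ∀ ω, ‖∑ i, ε ω i * f i (x j)‖^r ≤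
        2 * (‖ψ ω (x j)‖^r + ‖G ω (x j) - ψ ω (x j)‖^r) := fun ω => by
      rw [← hG]
      refine le_trans ?_ (rpow_two_bound _ _ r (norm_nonneg _) (norm_nonneg _) hr1 hr2)
      gcongr
      calc ‖G ω (x j)‖ = ‖ψ ω (x j) + (G ω (x j) - ψ ω (x j))‖ := by congr 1; ring
        _ ≤ _ := norm_add_le _ _
    have k3 := Finset.sum_le_sum (s := Finset.univ) fun ω _ => k2 ω
    rw [← Finset.mul_sum, Finset.sum_add_distrib] at k3
    have k4 := pow_mean hN (fun ω => ‖G ω (x j) - ψ ω (x j)‖) (fun _ => norm_nonneg _) r hr1 hr2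
    have k5 : (∑ ω, ‖G ω (x j) - ψ ω (x j)‖^2) / N = (1/400) * ∑ ω, ‖H ω (x j)‖^2 := by
      simp only [hH]; rw [← Finset.mul_sum]; field_simp
    have k6 : ((1:ℝ)/400)^(r/2) ≤ 1/20 := by
      calc ((1:ℝ)/400)^(r/2) ≤ ((1:ℝ)/400)^((1:ℝ)/2) := by
            apply Real.rpow_le_rpow_of_exponent_ge <;> linarith
        _ = 1/20 := by
            rw [← Real.sqrt_eq_rpow, show (1:ℝ)/400 = (1/20)^2 by norm_num,
              Real.sqrt_sq (by norm_num)]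
    rw [k5, Real.mul_rpow (by norm_num) (by positivity)] at k4
    have k7 : N * (((1:ℝ)/400)^(r/2) * (∑ ω, ‖H ω (x j)‖^2)^(r/2)) ≤
      N * (1/20 * (∑ ω, ‖H ω (x j)‖^2)^(r/2)) := by gcongr
    linarith
  have h3 := Finset.sum_le_sum (s := Finset.univ) fun j _ => h2 j
  rw [← Finset.mul_sum, Finset.sum_add_distrib, ← Finset.mul_sum, ← Finset.mul_sum,
    Finset.sum_comm] at h3
  have h4 : ∑ ω, ∑ j, ‖ψ ω (x j)‖^r ≤ N * (40 * w)^r := by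
    calc _ ≤ ∑ ω : Fin N, (40 * w)^r := Finset.sum_le_sum fun ω _ =>
            weak_le r (by linarith) x (ψ ω) 40 (by norm_num) (hψ1 ω)
      _ = _ := by simp
  have h5 : N / 2 * ∑ j, (∑ ω, ‖H ω (x j)‖^2)^(r/2) ≤ N / 2 * s := by gcongr
  refine le_of_mul_le_mul_left (a := (N:ℝ)) ?_ hN'
  linarith

lemma groth {𝕜 : Type*} [RCLike 𝕜] [Fact ((1:ℝ≥0∞) ≤ 1)] (r : ℝ) (hr1 : 1 ≤ r) (hr2 : r ≤ 2)
    {m : ℕ} (x : Fin m → lp (fun _ : ℕ => 𝕜) 1)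
    (n : ℕ) (f : Fin n → lp (fun _ : ℕ => 𝕜) 1 →L[𝕜] 𝕜)
    (hf : ∀ k, ∑ i, ‖f i (lp.single 1 k 1)‖^2 ≤ 1) :
    ∑ j, (∑ i, ‖f i (x j)‖^2)^(r/2) ≤ 20 * (40 * weakNorm 𝕜 r x)^r := by
  let V : Set ℝ := {v | ∃ (N : ℕ) (f : Fin N → lp (fun _ : ℕ => 𝕜) 1 →L[𝕜] 𝕜),
      (∀ k, ∑ i, ‖f i (lp.single 1 k 1)‖^2 ≤ 1) ∧ v = ∑ j, (∑ i, ‖f i (x j)‖^2)^(r/2)}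
  have hV : BddAbove V := by
    refine ⟨∑ j, (‖x j‖^2)^(r/2), ?_⟩
    rintro _ ⟨N, f, hf, rfl⟩
    gcongr with j
    exact l1_apriori f hf (x j)
  have hle : ∀ (N : ℕ) (f : Fin N → lp (fun _ : ℕ => 𝕜) 1 →L[𝕜] 𝕜),
      (∀ k, ∑ i, ‖f i (lp.single 1 k 1)‖^2 ≤ 1) → ∑ j, (∑ i, ‖f i (x j)‖^2)^(r/2) ≤ sSup V :=
    fun N f hf => le_csSup hV ⟨N, f, hf, rfl⟩
  have h1 : sSup V ≤ 10 * (40 * weakNorm 𝕜 r x)^r + sSup V / 2 := by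
    refine csSup_le ⟨_, n, f, hf, rfl⟩ ?_
    rintro _ ⟨N, g, hg, rfl⟩
    exact groth_step r hr1 hr2 x _ hle N g hg
  have := hle n f hf
  linarith

lemma groth' {𝕜 : Type*} [RCLike 𝕜] [Fact ((1:ℝ≥0∞) ≤ 1)] (r : ℝ) (hr1 : 1 ≤ r) (hr2 : r ≤ 2)
    {m : ℕ} (x : Fin m → lp (fun _ : ℕ => 𝕜) 1) (L : ℝ) (hL : 0 ≤ L)
    (f : Fin m → lp (fun _ : ℕ => 𝕜) 1 →L[𝕜] 𝕜)
    (hf : ∀ k, ∑ i, ‖f i (lp.single 1 k 1)‖^2 ≤ L^2) :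
    ∑ j, ‖f j (x j)‖^r ≤ 20 * (40 * weakNorm 𝕜 r x * L)^r := by
  rcases hL.eq_or_lt with rfl | hL0
  · have h0 : ∀ i z, f i z = 0 := fun i z => by
      have := l1_norm_le (f i) 0 (fun k => by
        have h1 := (Finset.single_le_sum (f := fun i => ‖f i (lp.single 1 k 1)‖^2)
          (fun _ _ => by positivity) (Finset.mem_univ i)).trans (hf k)
        simp only [ne_eq, OfNat.ofNat_ne_zero, not_false_eq_true, zero_pow] at h1
        nlinarith [norm_nonneg (f i (lp.single 1 k 1))]) z
      simpa using this
    simp only [h0, norm_zero, Real.zero_rpow (show r ≠ 0 by linarith), Finset.sum_const_zero,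
      mul_zero, le_refl]
  have h1 := groth r hr1 hr2 x m (fun i => ((L⁻¹ : ℝ) : 𝕜) • f i) (fun k => by
    simp only [smul_apply, norm_smul, mul_pow, RCLike.norm_ofReal, sq_abs]
    rw [← Finset.mul_sum, inv_pow, inv_mul_le_iff₀ (by positivity)]
    simpa using hf k)
  have hw : 0 ≤ weakNorm 𝕜 r x := weak_nonneg r x
  rw [Real.mul_rpow (by positivity) hL]
  calc ∑ j, ‖f j (x j)‖^r = (∑ j, ((L⁻¹ * ‖f j (x j)‖)^2)^(r/2)) * L^r := by
        rw [Finset.sum_mul]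
        refine Finset.sum_congr rfl fun j _ => ?_
        rw [← Real.rpow_natCast, ← Real.rpow_mul (by positivity),
          show ((2:ℕ):ℝ) * (r/2) = r by push_cast; ring, ← Real.mul_rpow (by positivity) hL]
        congr 1; field_simp
    _ ≤ (∑ j, (∑ i, ‖(((L⁻¹ : ℝ) : 𝕜) • f i) (x j)‖^2)^(r/2)) * L^r := by
        gcongr with j
        refine le_trans (le_of_eq ?_) (Finset.single_le_sum
          (f := fun i => ‖(((L⁻¹ : ℝ) : 𝕜) • f i) (x j)‖^2)
          (fun _ _ => by positivity) (Finset.mem_univ j))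
        simp only [smul_apply, norm_smul, RCLike.norm_ofReal, abs_of_pos (inv_pos.2 hL0)]
    _ ≤ (20 * (40 * weakNorm 𝕜 r x)^r) * L^r := by gcongr
    _ = _ := by ring

/-- passing from exponent `r` to exponent `s ≥ r` -/
lemma lr_le_ls {m : ℕ} (t : Fin m → ℝ) (ht : ∀ j, 0 ≤ t j) (W r s : ℝ) (hr : 0 < r) (hrs : r ≤ s)
    (hW : 0 ≤ W) (h : ∑ j, t j ^ r ≤ W ^ r) : ∑ j, t j ^ s ≤ W ^ s := by
  have h1 : ∀ j, t j ≤ W := fun j => by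
    have := (Finset.single_le_sum (f := fun j => t j ^ r)
      (fun j _ => Real.rpow_nonneg (ht j) _) (Finset.mem_univ j)).trans h
    exact (Real.rpow_le_rpow_iff (ht j) hW hr).1 this
  have e : ∀ u : ℝ, 0 ≤ u → u ^ s = u ^ (s-r) * u ^ r := fun u hu => by
    rw [← Real.rpow_add_of_nonneg hu (by linarith) hr.le]; congr 1; ring
  calc ∑ j, t j ^ s ≤ ∑ j, W^(s-r) * t j ^ r := by
        refine Finset.sum_le_sum fun j _ => ?_
        rw [e _ (ht j)]
        have := ht j
        gcongr
        exact h1 j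
    _ = W^(s-r) * ∑ j, t j ^ r := by rw [Finset.mul_sum]
    _ ≤ W^(s-r) * W^r := by gcongr
    _ = _ := (e W hW).symm

lemma minkowski_sum {m : ℕ} (K : Finset ℕ) (v : ℕ → Fin m → ℝ) (hv : ∀ k j, 0 ≤ v k j) (P : ℝ)
    (hP : 1 ≤ P) :
    (∑ j, (∑ k ∈ K, v k j)^P)^(1/P) ≤ ∑ k ∈ K, (∑ j, v k j ^ P)^(1/P) := by
  induction K using Finset.induction_on with
  | empty =>
    simp only [Finset.sum_empty]
    rw [Real.zero_rpow (by linarith), Finset.sum_const_zero, Real.zero_rpow]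
    have : 0 < 1/P := by positivity
    exact this.ne'
  | insert k K hk ih =>
    simp only [Finset.sum_insert hk]
    refine (Real.Lp_add_le_of_nonneg Finset.univ hP (fun j _ => hv k j)
      (fun j _ => Finset.sum_nonneg fun k _ => hv k j)).trans ?_
    gcongr

lemma orlicz {𝕜 : Type*} [RCLike 𝕜] (q : ℝ≥0∞) [Fact (1 ≤ q)] (hq1 : 1 ≤ q.toReal)
    (hq2 : q.toReal ≤ 2) {m : ℕ} (x : Fin m → lp (fun _ : ℕ => 𝕜) q) (W : ℝ) (hW : 0 ≤ W)
    (h : ∀ φ : lp (fun _ : ℕ => 𝕜) q →L[𝕜] 𝕜, ‖φ‖ ≤ 1 → ∑ j, ‖φ (x j)‖ ≤ W) :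
    ∑ j, ‖x j‖^2 ≤ 25 * W^2 := by
  obtain ⟨N, hN, ε, hε1, hε⟩ := signs 𝕜 m
  have hN' : (0:ℝ) < N := by exact_mod_cast hN
  set p := q.toReal
  have hp : 0 < p := by linarith
  have hS : ∀ ω, ‖∑ j, ε ω j • x j‖ ≤ W := fun ω => by
    obtain ⟨g, hg1, hg2⟩ := exists_dual_vector'' 𝕜 (∑ j, ε ω j • x j)
    have h1 : ‖g (∑ j, ε ω j • x j)‖ = ‖∑ j, ε ω j • x j‖ := by rw [hg2]; simp
    rw [← h1, map_sum]
    refine (norm_sum_le _ _).trans ((le_of_eq ?_).trans (h g hg1))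
    refine Finset.sum_congr rfl fun j _ => ?_
    rw [map_smul, norm_smul, hε1, one_mul]
  have hK : ∀ K : Finset ℕ, ∑ j, (∑ k ∈ K, ‖x j k‖^p)^(2/p) ≤ 25 * W^2 := fun K => by
    have h1 : ∑ k ∈ K, (∑ j, ‖x j k‖^2)^(p/2) ≤ 5 * W^p := by
      refine le_of_mul_le_mul_left (a := (N:ℝ)) ?_ hN'
      rw [Finset.mul_sum]
      calc _ ≤ ∑ k ∈ K, 5 * ∑ ω, ‖∑ j, ε ω j * x j k‖^p := Finset.sum_le_sum fun k _ =>
              khin ε (fun j => x j k) (hε _).1 (hε _).2 p hq1 hq2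
        _ = 5 * ∑ ω, ∑ k ∈ K, ‖∑ j, ε ω j * x j k‖^p := by
              rw [← Finset.mul_sum, Finset.sum_comm]
        _ ≤ 5 * ∑ ω : Fin N, W^p := by
              gcongr with ω
              have := lp.sum_rpow_le_norm_rpow hp (∑ j, ε ω j • x j) K
              refine le_trans (le_of_eq ?_) (this.trans ?_)
              · refine Finset.sum_congr rfl fun k _ => ?_
                rw [lp.coeFn_sum]
                simp [p]
              · exact Real.rpow_le_rpow (norm_nonneg _) (hS ω) hp.le
        _ = _ := by simp; ring
    have h2 := minkowski_sum K (fun k j => ‖x j k‖^p) (fun _ _ => by positivity) (2/p)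
      (by rw [le_div_iff₀] <;> linarith)
    have e : ∀ k j, (‖x j k‖^p)^(2/p) = ‖x j k‖^2 := fun k j => by
      rw [← Real.rpow_mul (norm_nonneg _), mul_div_cancel₀ _ hp.ne']; norm_num
    simp only [e, one_div_div] at h2
    have h3 := Real.rpow_le_rpow (by positivity) (h2.trans h1) (show 0 ≤ 2/p by positivity)
    rw [← Real.rpow_mul (by positivity), show p/2*(2/p) = 1 by field_simp, Real.rpow_one,
      Real.mul_rpow (by norm_num) (by positivity), ← Real.rpow_mul hW,
      mul_div_cancel₀ _ hp.ne'] at h3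
    have h4 : (5:ℝ)^(2/p) ≤ 25 := by
      calc (5:ℝ)^(2/p) ≤ 5^(2:ℝ) := by
            apply Real.rpow_le_rpow_of_exponent_le (by norm_num)
            rw [div_le_iff₀ hp]; linarith
        _ = 25 := by norm_num
    refine h3.trans ?_
    rw [show (2:ℝ) = ((2:ℕ):ℝ) by norm_num, Real.rpow_natCast W 2] 
    gcongr
    exact_mod_cast h4
  have ht : Filter.Tendsto (fun K : Finset ℕ => ∑ j, (∑ k ∈ K, ‖x j k‖^p)^(2/p)) Filter.atTop
      (nhds (∑ j, (‖x j‖^p)^(2/p))) := by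
    refine tendsto_finsetSum _ fun j _ => ?_
    exact (lp.hasSum_norm hp (x j)).rpow_const (Or.inr (by positivity))
  have h5 := le_of_tendsto' ht hK
  refine le_trans (le_of_eq ?_) h5
  refine Finset.sum_congr rfl fun j _ => ?_
  rw [← Real.rpow_mul (norm_nonneg _), mul_div_cancel₀ _ hp.ne']; norm_num

lemma orlicz_q {𝕜 : Type*} [RCLike 𝕜] (q : ℝ≥0∞) [Fact (1 ≤ q)] (hq1 : 1 ≤ q.toReal)
    (hq2 : q.toReal ≤ 2) {m : ℕ} (x : Fin m → lp (fun _ : ℕ => 𝕜) q) (r : ℝ) (hr1 : 1 ≤ r)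
    (hr2 : r < 2) : ∑ j, ‖x j‖^(2*r/(2-r)) ≤ (5 * weakNorm 𝕜 r x)^(2*r/(2-r)) := by
  have hr0 : 0 < r := by linarith
  have hr3 : 0 < 2 - r := by linarith
  set w := weakNorm 𝕜 r x
  have hw : 0 ≤ w := weak_nonneg r x
  set Q := 2*r/(2-r) with hQ
  have hQ0 : 0 < Q := by positivity
  set T := ∑ j, ‖x j‖^Q
  have hT : 0 ≤ T := by positivity
  rcases hT.eq_or_lt with hT0 | hT0
  · rw [← hT0]; positivity
  set α := 2*(r-1)/(2-r) with hα
  have hα0 : 0 ≤ α := div_nonneg (by linarith) hr3.le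
  have h1 := orlicz q hq1 hq2 (fun j => ((‖x j‖^α : ℝ) : 𝕜) • x j) (T^((r-1)/r) * w)
    (by positivity) (fun φ hφ => by
      have k1 := weak_le r hr0 x φ 1 zero_le_one hφ
      rw [one_mul] at k1
      have k2 : (∑ j, ‖φ (x j)‖^r)^(1/r) ≤ w := by
        have := Real.rpow_le_rpow (by positivity) k1 (show 0 ≤ 1/r by positivity)
        rwa [← Real.rpow_mul hw, mul_one_div_cancel hr0.ne', Real.rpow_one] at this
      have k3 : ∀ j, ‖φ (((‖x j‖^α : ℝ) : 𝕜) • x j)‖ = ‖x j‖^α * ‖φ (x j)‖ := fun j => by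
        rw [map_smul, norm_smul, RCLike.norm_ofReal, abs_of_nonneg (by positivity)]
      simp only [k3]
      rcases hr1.eq_or_lt with rfl | hr1
      · simpa [hα] using k2
      have hc : (r/(r-1)).HolderConjugate r := by
        rw [Real.holderConjugate_comm]
        exact Real.HolderConjugate.conjExponent hr1
      refine (Real.inner_le_Lp_mul_Lq_of_nonneg Finset.univ hc (fun _ _ => by positivity)
        (fun _ _ => by positivity)).trans ?_
      have k4 : ∀ j, (‖x j‖^α)^(r/(r-1)) = ‖x j‖^Q := fun j => by
        rw [← Real.rpow_mul (norm_nonneg _)]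
        congr 1
        have : r - 1 ≠ 0 := by linarith
        rw [hα, hQ]; field_simp
      simp only [k4, one_div_div]
      gcongr)
  have h2 : ∀ j, ‖((‖x j‖^α : ℝ) : 𝕜) • x j‖^2 = ‖x j‖^Q := fun j => by
    rw [norm_smul, RCLike.norm_ofReal, abs_of_nonneg (by positivity), mul_pow,
      ← Real.rpow_natCast, ← Real.rpow_mul (norm_nonneg _), ← Real.rpow_natCast ‖x j‖ 2,
      ← Real.rpow_add_of_nonneg (norm_nonneg _) (by positivity) (by positivity)]
    congr 1
    rw [hα, hQ]; push_cast; field_simp; ring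
  simp only [h2] at h1
  change T ≤ _ at h1
  have h3 : T = (T^((r-1)/r))^2 * (T^(1/Q))^2 := by
    rw [← mul_pow, ← Real.rpow_add hT0, ← Real.rpow_natCast, ← Real.rpow_mul hT]
    conv_lhs => rw [← Real.rpow_one T]
    congr 1
    rw [hQ]; push_cast; field_simp; ring
  have h4 : (T^(1/Q))^2 ≤ (5*w)^2 := by
    refine le_of_mul_le_mul_left (a := (T^((r-1)/r))^2) ?_ (by positivity)
    rw [← h3]
    refine h1.trans (le_of_eq (by ring))
  have h5 : T^(1/Q) ≤ 5*w := by
    refine le_of_sq_le_sq ?_ ?_ <;> first | exact h4 | positivity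
  have h6 := Real.rpow_le_rpow (by positivity) h5 hQ0.le
  rwa [← Real.rpow_mul hT, one_div_mul_cancel hQ0.ne', Real.rpow_one] at h6

lemma prod_le_sum {n : ℕ} (hn : 0 < n) (b : Fin n → ℝ) (hb : ∀ i, 0 ≤ b i) (r : ℝ) (hr : 0 ≤ r) :
    ∏ i, b i ^ r ≤ ∑ i, b i ^ (r * n) := by
  haveI : Nonempty (Fin n) := ⟨⟨0, hn⟩⟩
  obtain ⟨i0, h0⟩ := Finite.exists_max b
  calc ∏ i, b i ^ r ≤ ∏ i : Fin n, b i0 ^ r := by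
        refine Finset.prod_le_prod (fun i _ => Real.rpow_nonneg (hb i) _) fun i _ => ?_
        exact Real.rpow_le_rpow (hb i) (h0 i) hr
    _ = b i0 ^ (r * n) := by
        rw [Finset.prod_const, Real.rpow_mul (hb i0)]; simp
    _ ≤ _ := Finset.single_le_sum (f := fun i => b i ^ (r * n))
        (fun i _ => Real.rpow_nonneg (hb i) _) (Finset.mem_univ i0)

lemma holder_n {n m : ℕ} (hn : 0 < n) (t : Fin n → Fin m → ℝ) (ht : ∀ i j, 0 ≤ t i j)
    (U : Fin n → ℝ) (hU : ∀ i, 0 ≤ U i) (r : ℝ) (hr : 0 < r)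
    (h : ∀ i, ∑ j, t i j ^ (r * n) ≤ U i ^ (r * n)) :
    ∑ j, ∏ i, t i j ^ r ≤ n * (∏ i, U i) ^ r := by
  have hn' : (0:ℝ) < n := by exact_mod_cast hn
  have hrn : 0 < r * n := by positivity
  by_cases h0 : ∃ i, U i = 0
  · obtain ⟨i, hi⟩ := h0
    have h1 : ∀ j, t i j = 0 := fun j => by
      have h2 := (Finset.single_le_sum (f := fun j => t i j ^ (r * n))
        (fun j _ => Real.rpow_nonneg (ht i j) _) (Finset.mem_univ j)).trans (h i)
      rw [Real.rpow_le_rpow_iff (ht i j) (hU i) hrn, hi] at h2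
      exact le_antisymm h2 (ht i j)
    have h3 : ∀ j, ∏ i, t i j ^ r = 0 := fun j =>
      Finset.prod_eq_zero (Finset.mem_univ i) (by rw [h1, Real.zero_rpow hr.ne'])
    simp only [h3, Finset.sum_const_zero]
    have : 0 ≤ ∏ i, U i := Finset.prod_nonneg fun i _ => hU i
    positivity
  push Not at h0
  have hU' : ∀ i, 0 < U i := fun i => lt_of_le_of_ne (hU i) (h0 i).symm
  rw [← Real.finsetProd_rpow _ _ (fun i _ => hU i)]
  have e : ∀ j, ∏ i, t i j ^ r = (∏ i, U i ^ r) * ∏ i, (t i j / U i) ^ r := fun j => by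
    rw [← Finset.prod_mul_distrib]
    refine Finset.prod_congr rfl fun i _ => ?_
    rw [← Real.mul_rpow (hU i) (div_nonneg (ht i j) (hU i)), mul_div_cancel₀ _ (h0 i)]
  simp only [e]
  rw [← Finset.mul_sum, mul_comm]
  have hP : 0 ≤ ∏ i, U i ^ r := Finset.prod_nonneg fun i _ => Real.rpow_nonneg (hU i) _
  gcongr
  calc ∑ j, ∏ i, (t i j / U i) ^ r ≤ ∑ j, ∑ i, (t i j / U i) ^ (r * n) :=
        Finset.sum_le_sum fun j _ => prod_le_sum hn _ (fun i => div_nonneg (ht i j) (hU i)) r hr.le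
    _ = ∑ i, ∑ j, (t i j / U i) ^ (r * n) := Finset.sum_comm
    _ ≤ ∑ i : Fin n, 1 := by
        refine Finset.sum_le_sum fun i _ => ?_
        have : ∀ j, (t i j / U i) ^ (r * n) = t i j ^ (r*n) / U i ^ (r*n) := fun j =>
          Real.div_rpow (ht i j) (hU i) _
        simp only [this]
        rw [← Finset.sum_div, div_le_one (Real.rpow_pos_of_pos (hU' i) _)]
        exact h i
    _ = n := by simp

lemma finish (S D P r : ℝ) (hr : 0 < r) (hS : 0 ≤ S) (hD : 0 ≤ D) (hP : 0 ≤ P)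
    (h : S ≤ D * P ^ r) : S ^ (1/r) ≤ D ^ (1/r) * P := by
  have := Real.rpow_le_rpow hS h (show 0 ≤ 1/r by positivity)
  rwa [Real.mul_rpow hD (by positivity), ← Real.rpow_mul hP, mul_one_div_cancel hr.ne',
    Real.rpow_one] at this

lemma bilin {𝕜 : Type*} [RCLike 𝕜] (q : ℝ≥0∞) [Fact (1 ≤ q)] (hq : q = 1)
    {E : Type*} [NormedAddCommGroup E] [NormedSpace 𝕜 E] (r : ℝ) (hr1 : 1 ≤ r) (hr2 : r ≤ 2)
    (F : E → lp (fun _ : ℕ => 𝕜) q →L[𝕜] 𝕜) (G : lp (fun _ : ℕ => 𝕜) q → E →L[𝕜] 𝕜)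
    (hFG : ∀ x y, F y x = G x y) (a : ℝ) (ha : 0 ≤ a) (hG : ∀ x, ‖G x‖ ≤ a * ‖x‖) {m : ℕ}
    (x : Fin m → lp (fun _ : ℕ => 𝕜) q) (y : Fin m → E) :
    ∑ j, ‖F (y j) (x j)‖^r ≤ 20 * (40 * weakNorm 𝕜 r x * (a * weakNorm 𝕜 r y))^r := by
  subst hq
  have hw : 0 ≤ weakNorm 𝕜 r y := weak_nonneg r y
  refine groth' r hr1 hr2 x _ (by positivity) (fun j => F (y j)) fun k => ?_
  simp only [hFG]
  have h1 := weak_le r (by linarith) y (G (lp.single 1 k 1)) a ha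
    ((hG _).trans (by rw [lp.norm_single (by simp)]; simp))
  have := lr_le_ls _ (fun j => norm_nonneg _) _ r 2 (by linarith) hr2 (by positivity) h1
  exact_mod_cast this

/-- For `n ≥ 2` and `1 < p ≤ 2`, every continuous `n`-linear form on
`ℓ₁ × ⋯ × ℓ₁ × ℓ_p` (with `n − 1` factors `ℓ₁`) is absolutely `(r; r, …, r)`-summing for
every `1 ≤ r ≤ 2^{n−1}/(2^{n−1} − 1)`. -/
theorem ell1_ellp_summing {𝕜 : Type*} [RCLike 𝕜] (n : ℕ) (hn : 2 ≤ n) (p : ℝ)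
    (hp1 : 1 < p) (hp2 : p ≤ 2)
    [∀ i : Fin n, Fact (1 ≤ pexp n p i)]
    (A : ContinuousMultilinearMap 𝕜 (fun i : Fin n => lp (fun _ : ℕ => 𝕜) (pexp n p i)) 𝕜) :
    ∀ r : ℝ, 1 ≤ r → r ≤ 2 ^ (n - 1) / (2 ^ (n - 1) - 1) →
      ∃ C > 0, ∀ (m : ℕ) (x : ∀ i : Fin n, Fin m → lp (fun _ : ℕ => 𝕜) (pexp n p i)),
        (∑ j, ‖A (fun i => x i j)‖ ^ r) ^ (1 / r) ≤ C * ∏ i, weakNorm 𝕜 r (x i) := by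
  intro r hr1 hr
  have hr0 : 0 < r := by linarith
  obtain rfl | h3 : n = 2 ∨ 3 ≤ n := by omega
  · have hr2 : r ≤ 2 := by norm_num at hr; exact hr
    refine ⟨(20:ℝ)^(1/r) * 40 * (‖A‖ + 1), by positivity, fun m x => ?_⟩
    have key := bilin (𝕜 := 𝕜) (pexp 2 p 0) (by simp [pexp]) r hr1 hr2
      (fun y => A.toContinuousLinearMap (Function.update 0 1 y) 0)
      (fun z => A.toContinuousLinearMap (Function.update 0 0 z) 1)
      (fun z y => by
        simp only [ContinuousMultilinearMap.toContinuousLinearMap_apply]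
        rw [Function.update_comm (by decide)])
      (‖A‖ + 1) (by positivity)
      (fun z => by
        refine ContinuousLinearMap.opNorm_le_bound _ (by positivity) fun y => ?_
        simp only [ContinuousMultilinearMap.toContinuousLinearMap_apply]
        refine (A.le_opNorm _).trans ?_
        rw [Fin.prod_univ_two, Function.update_self, Function.update_of_ne (by decide),
          Function.update_self, ← mul_assoc]
        gcongr
        linarith) (x 0) (x 1)
    have e : ∀ j, A.toContinuousLinearMap (Function.update 0 1 (x 1 j)) 0 (x 0 j)
        = A (fun i => x i j) := fun j => by
      simp only [ContinuousMultilinearMap.toContinuousLinearMap_apply]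
      congr 1
      ext1 i
      fin_cases i
      · simp
      · simp
    simp only [e] at key
    have w0 := weak_nonneg (𝕜 := 𝕜) r (x 0)
    have w1 := weak_nonneg (𝕜 := 𝕜) r (x 1)
    refine (finish _ 20 _ r hr0 (by positivity) (by norm_num) (by positivity) key).trans
      (le_of_eq ?_)
    rw [Fin.prod_univ_two]
    ring
  · have hn0 : 0 < n := by omega
    have hn3 : (3:ℝ) ≤ n := by exact_mod_cast h3
    have hr43 : r ≤ 4/3 := by
      refine hr.trans ?_
      have : (4:ℝ) ≤ 2^(n-1) := by
        calc (4:ℝ) = 2^2 := by norm_num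
          _ ≤ 2^(n-1) := pow_le_pow_right₀ (by norm_num) (by omega)
      rw [div_le_iff₀ (by linarith)]
      linarith
    have hw : ∀ (m : ℕ) (x : ∀ i : Fin n, Fin m → lp (fun _ : ℕ => 𝕜) (pexp n p i)) i,
        0 ≤ 5 * weakNorm 𝕜 r (x i) := fun m x i => mul_nonneg (by norm_num) (weak_nonneg r (x i))
    refine ⟨((‖A‖ + 1)^r * n)^(1/r) * 5^n, by positivity, fun m x => ?_⟩
    have hq : ∀ i, 1 ≤ (pexp n p i).toReal ∧ (pexp n p i).toReal ≤ 2 := fun i => by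
      unfold pexp
      split_ifs
      · simp
      · rw [ENNReal.toReal_ofReal (by linarith)]; exact ⟨hp1.le, hp2⟩
    have key := holder_n hn0 (fun i j => ‖x i j‖) (fun _ _ => norm_nonneg _)
      (fun i => 5 * weakNorm 𝕜 r (x i)) (hw m x) r hr0 (fun i => by
        refine lr_le_ls _ (fun j => norm_nonneg _) _ (2*r/(2-r)) _ ?_ ?_ (hw m x i)
          (orlicz_q _ (hq i).1 (hq i).2 (x i) r hr1 (by linarith))
        · exact div_pos (by linarith) (by linarith)
        · rw [div_le_iff₀ (by linarith)]
          have : 2 ≤ n * (2 - r) := by nlinarith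
          nlinarith)
    have hP : 0 ≤ ∏ i, 5 * weakNorm 𝕜 r (x i) := Finset.prod_nonneg fun i _ => hw m x i
    have key2 : ∑ j, ‖A (fun i => x i j)‖^r
        ≤ ((‖A‖ + 1)^r * n) * (∏ i, 5 * weakNorm 𝕜 r (x i))^r := by
      calc ∑ j, ‖A (fun i => x i j)‖^r ≤ ∑ j, (‖A‖ + 1)^r * ∏ i, ‖x i j‖^r := by
            refine Finset.sum_le_sum fun j _ => ?_
            rw [Real.finsetProd_rpow _ _ (fun i _ => norm_nonneg _),
              ← Real.mul_rpow (by positivity) (by positivity)]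
            gcongr
            refine (A.le_opNorm _).trans ?_
            gcongr
            linarith
        _ = (‖A‖ + 1)^r * ∑ j, ∏ i, ‖x i j‖^r := by rw [Finset.mul_sum]
        _ ≤ (‖A‖ + 1)^r * (n * (∏ i, 5 * weakNorm 𝕜 r (x i))^r) := by gcongr
        _ = _ := by ring
    refine (finish _ _ _ r hr0 (by positivity) (by positivity) hP key2).trans (le_of_eq ?_)
    rw [Finset.prod_mul_distrib]
    simp
    ring
end
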